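/- If q = 2^r and r ≥ 3 is odd, then there exists a Hermitian self-orthogonal [q^2+1, q-1, q^2-q+3]_{q^2} generalised Reed-Solomon code; that is, there exist nonzero θ_1, …, θ_{q^2+1} ∈ F_{q^2} such that the code {(θ_1 f(a_1), …, θ_{q^2} f(a_{q^2}), θ_{q^2+1} f_{q-2}) : f ∈ F_{q^2}[X], deg f ≤ q-2} is Hermitian self-orthogonal. -/

import Mathlib

open Polynomial

/-- The codeword of the (extended) `k`-dimensional Reed-Solomon code of length `q² + 1`
associated to a polynomial `f`: the evaluations of `f` at all elements of the field
(enumerated by `a`), followed by the coefficient of `X^(k-1)` in `f`. -/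
def rsWord (q k : ℕ) {F : Type} [Field F] (a : Fin (q ^ 2) → F)
    (f : Polynomial F) (i : Fin (q ^ 2 + 1)) : F :=
  if hi : (i : ℕ) < q ^ 2 then f.eval (a ⟨(i : ℕ), hi⟩) else f.coeff (k - 1)

/-- The puncture code `P(C)` of the `k`-dimensional Reed-Solomon code `C` of length `q² + 1`
over `F = 𝔽_{q²}`: all vectors `λ` with entries in the subfield `𝔽_q` (i.e. `λ_i^q = λ_i`)
such that `∑ λ_i u_i v_i^q = 0` for all codewords `u, v` of `C`. -/
def puncRS (q k : ℕ) {F : Type} [Field F] [Fintype F] (a : Fin (q ^ 2) → F) :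
    Set (Fin (q ^ 2 + 1) → F) :=
  {lam | (∀ i, lam i ^ q = lam i) ∧
    ∀ f g : Polynomial F, f.degree < (k : WithBot ℕ) → g.degree < (k : WithBot ℕ) →
      ∑ i, lam i * rsWord q k a f i * (rsWord q k a g i) ^ q = 0}

/-- The Hamming weight of a vector: the number of its nonzero coordinates. -/
noncomputable def wt {n : ℕ} {F : Type} [Zero F] (v : Fin n → F) : ℕ :=
  Set.ncard {i | v i ≠ 0}

/-!
A word `λ` of full weight in the puncture code has its entries in `𝔽_q^×`, so they are norms
`θ_i^(q+1)`, and scaling the coordinates by the `θ_i` makes the code Hermitian self-orthogonal.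

Such a word is `λ(x) = Tr(β x³) + N(x) + 1`, with entry `1` at infinity, where `β` has norm `1`
and is not a cube; `β` exists because `3` divides `q + 1` but not `q - 1`. For `i, j < q - 1` the
moment `∑ λ(x) x^i x^(qj)` is a combination of power sums `∑ x^(i' + qj')` with `i', j' ≤ q + 1`,
which vanish unless `i' = j' = q - 1`. Only the norm term for `i = j = q - 2` reaches this
exponent, and its contribution `-1` cancels the entry at infinity.

At a zero of `λ`, the elements `t = β x³` and `s = N(x)` satisfy `t t^q = s³` and
`t + t^q + s + 1 = 0`. In characteristic two this puts `(s, t)` on a nodal cubic, whose rational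
parametrization exhibits `t`, and hence `β`, as a cube.
-/

section CyclicGroup

variable {G : Type*} [CommGroup G] [IsCyclic G] [Finite G] {m n d : ℕ}

lemma range_powMonoidHom_eq_ker (hG : Nat.card G = m * n) :
    (powMonoidHom m : G →* G).range = (powMonoidHom n : G →* G).ker := by
  have hm : 0 < m := Nat.pos_of_mul_pos_right (hG ▸ Nat.card_pos)
  apply Subgroup.eq_of_le_of_card_ge
  · rintro _ ⟨x, rfl⟩
    simp [MonoidHom.mem_ker, ← pow_mul, ← hG]
  · rw [IsCyclic.card_powMonoidHom_range, IsCyclic.card_powMonoidHom_ker, hG,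
      Nat.gcd_mul_left_left, Nat.gcd_mul_right_left, Nat.mul_div_cancel_left n hm]

lemma exists_pow_eq_of_pow_eq_one (hG : Nat.card G = m * n) {x : G} (hx : x ^ n = 1) :
    ∃ y : G, y ^ m = x := by
  have hmem : x ∈ (powMonoidHom n : G →* G).ker := hx
  rwa [← range_powMonoidHom_eq_ker hG] at hmem

lemma exists_pow_eq_one_forall_pow_ne (hG : Nat.card G = m * n) (hn : d ∣ n) (hm : ¬d ∣ m) :
    ∃ x : G, x ^ n = 1 ∧ ∀ y : G, y ^ d ≠ x := by
  obtain ⟨e, rfl⟩ := hn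
  have he : 0 < e := Nat.pos_of_mul_pos_left (Nat.pos_of_mul_pos_left (hG ▸ Nat.card_pos))
  by_contra! h
  have hle : (powMonoidHom (d * e) : G →* G).ker ≤ (powMonoidHom (m * e) : G →* G).ker := by
    rw [← range_powMonoidHom_eq_ker (hG.trans (mul_left_comm m d e))]
    exact h
  have hdvd := Subgroup.card_dvd_of_le hle
  rw [IsCyclic.card_powMonoidHom_ker, IsCyclic.card_powMonoidHom_ker, hG, Nat.gcd_mul_left_left,
    mul_left_comm, Nat.gcd_mul_left_left] at hdvd
  exact hm (Nat.dvd_of_mul_dvd_mul_right he hdvd)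

end CyclicGroup

lemma sq_sub_one_dvd_add_mul_iff {q i j : ℕ} (hq : 4 ≤ q) (hi : i ≤ q + 1)
    (hj : j ≤ q + 1) (h0 : i + q * j ≠ 0) :
    q ^ 2 - 1 ∣ i + q * j ↔ i = q - 1 ∧ j = q - 1 := by
  obtain ⟨p, rfl⟩ := Nat.exists_eq_add_of_le' hq
  have hsub : (p + 4) ^ 2 - 1 = (p + 3) + (p + 4) * (p + 3) :=
    Nat.sub_eq_of_eq_add (by ring)
  rw [hsub]
  constructor
  · rintro ⟨c, hc⟩
    obtain rfl : c = 1 := by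
      have hpos : c ≠ 0 := by
        rintro rfl
        exact h0 hc
      have hlt : c < 2 := by
        by_contra! h2
        nlinarith
      omega
    obtain rfl : j = p + 3 := by
      apply le_antisymm <;> by_contra! h <;> nlinarith
    exact ⟨by lia, rfl⟩
  · rintro ⟨rfl, rfl⟩
    rfl

section FiniteField

variable {F : Type*} [Field F] [Fintype F] {q : ℕ}

lemma exists_ringHom_eq_pow_of_dvd_card (hq : q ∣ Fintype.card F) :
    ∃ σ : F →+* F, ∀ x, σ x = x ^ q := by
  obtain ⟨p, _, n, hp, hcard⟩ := FiniteField.card' F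
  obtain ⟨k, -, rfl⟩ := (Nat.dvd_prime_pow hp).1 (hcard ▸ hq)
  have := Fact.mk hp
  exact ⟨iterateFrobenius F p k, fun _ ↦ rfl⟩

lemma sum_pow_eq_ite {n : ℕ} (hn : n ≠ 0) :
    ∑ x : F, x ^ n = if Fintype.card F - 1 ∣ n then -1 else 0 := by
  classical
  rw [← FiniteField.sum_pow_units, Fintype.sum_eq_add_sum_subtype_ne _ 0, zero_pow hn, zero_add]
  exact (Fintype.sum_equiv unitsEquivNeZero _ _ fun _ ↦ rfl).symm

lemma natCard_units_eq_succ_mul_pred (hF : Fintype.card F = q ^ 2) :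
    Nat.card Fˣ = (q + 1) * (q - 1) := by
  rw [Nat.card_units, Nat.card_eq_fintype_card, hF]
  simpa using Nat.sq_sub_sq q 1

lemma pow_pow_eq_self_of_card_eq_sq (hF : Fintype.card F = q ^ 2) (x : F) : (x ^ q) ^ q = x := by
  rw [← pow_mul, ← sq, ← hF, FiniteField.pow_card]

lemma exists_pow_succ_eq_of_pow_eq_self (hF : Fintype.card F = q ^ 2) {l : F} (hl : l ^ q = l) :
    ∃ θ : F, θ ^ (q + 1) = l := by
  rcases eq_or_ne l 0 with rfl | hl0
  · exact ⟨0, by simp⟩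
  have hq : q ≠ 0 := by
    rintro rfl
    simp at hF
  have hone : Units.mk0 l hl0 ^ (q - 1) = 1 := by
    ext
    simpa using (mul_eq_right₀ hl0).1 ((pow_sub_one_mul hq l).trans hl)
  obtain ⟨θ, hθ⟩ := exists_pow_eq_of_pow_eq_one (natCard_units_eq_succ_mul_pred hF) hone
  exact ⟨θ, by simpa using congrArg Units.val hθ⟩

lemma exists_pow_succ_eq_one_forall_pow_ne (hF : Fintype.card F = q ^ 2) {d : ℕ}
    (hd : d ∣ q + 1) (hd' : ¬d ∣ q - 1) : ∃ β : F, β ^ (q + 1) = 1 ∧ ∀ y : F, y ^ d ≠ β := by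
  obtain ⟨u, hu, hud⟩ := exists_pow_eq_one_forall_pow_ne
    ((natCard_units_eq_succ_mul_pred hF).trans (mul_comm _ _)) hd hd'
  refine ⟨u, by simpa using congrArg Units.val hu, fun y hy ↦ ?_⟩
  have hy0 : y ≠ 0 := by
    rintro rfl
    have hd0 : d ≠ 0 := ne_zero_of_dvd_ne_zero q.succ_ne_zero hd
    exact u.ne_zero (by rw [← hy, zero_pow hd0])
  exact hud (Units.mk0 y hy0) (Units.ext (by simpa using hy))

lemma sum_pow_mul_pow_pow (hF : Fintype.card F = q ^ 2) (hq : 4 ≤ q) {i j : ℕ}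
    (hi : i ≤ q + 1) (hj : j ≤ q + 1) :
    ∑ x : F, x ^ i * (x ^ q) ^ j = if i = q - 1 ∧ j = q - 1 then -1 else 0 := by
  simp_rw [← pow_mul, ← pow_add]
  by_cases h0 : i + q * j = 0
  · have hi0 : i ≠ q - 1 := by omega
    simp [h0, hi0]
  · simp_rw [sum_pow_eq_ite h0, hF, sq_sub_one_dvd_add_mul_iff hq hi hj h0]

end FiniteField

lemma eval_eq_sum_range_of_degree_lt {R : Type*} [Semiring R] {f : R[X]} {n : ℕ}
    (hf : f.degree < n) (x : R) : f.eval x = ∑ i ∈ Finset.range n, f.coeff i * x ^ i := by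
  rw [eval_eq_sum, ← sum_fin _ (by simp) hf,
    Fin.sum_univ_eq_sum_range fun i ↦ f.coeff i * x ^ i]

lemma sum_mul_eval_mul_map_eval {R : Type*} [CommSemiring R] (σ : R →+* R) (s : Finset R)
    (w : R → R) {f g : R[X]} {m n : ℕ} (hf : f.degree < m) (hg : g.degree < n) :
    ∑ x ∈ s, w x * f.eval x * σ (g.eval x) =
      ∑ i ∈ Finset.range m, ∑ j ∈ Finset.range n,
        f.coeff i * σ (g.coeff j) * ∑ x ∈ s, w x * (x ^ i * σ x ^ j) := by
  simp_rw [eval_eq_sum_range_of_degree_lt hf, eval_eq_sum_range_of_degree_lt hg, map_sum,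
    map_mul, map_pow, mul_assoc (w _), Finset.sum_mul_sum, Finset.mul_sum]
  rw [Finset.sum_comm]
  refine Finset.sum_congr rfl fun i _ ↦ ?_
  rw [Finset.sum_comm]
  refine Finset.sum_congr rfl fun j _ ↦ Finset.sum_congr rfl fun x _ ↦ ?_
  ring

section TraceNorm

/-- The function `x ↦ Tr(β x³) + N(x) + 1`, where `Tr(t) = t + t^q` and `N(t) = t^(q+1)` are the
trace and the norm of `𝔽_{q²}` over `𝔽_q`. It is the source of words of the puncture code:
its values lie in `𝔽_q`, and few of its moments `∑ λ(x) x^i x^(qj)` are nonzero. -/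
def traceNormMultiplier {R : Type*} [Semiring R] (q : ℕ) (β x : R) : R :=
  β * x ^ 3 + (β * x ^ 3) ^ q + x ^ (q + 1) + 1

lemma traceNormMultiplier_pow {F : Type*} [Field F] [Fintype F] {q : ℕ}
    (hF : Fintype.card F = q ^ 2) (β x : F) :
    traceNormMultiplier q β x ^ q = traceNormMultiplier q β x := by
  obtain ⟨σ, hσ⟩ := exists_ringHom_eq_pow_of_dvd_card (hF ▸ dvd_pow_self q two_ne_zero)
  have hnorm : (x ^ (q + 1)) ^ q = x ^ (q + 1) := by
    rw [pow_succ, mul_pow, pow_pow_eq_self_of_card_eq_sq hF, mul_comm]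
  rw [← hσ, traceNormMultiplier, map_add, map_add, map_add, map_one]
  simp_rw [hσ]
  rw [pow_pow_eq_self_of_card_eq_sq hF, hnorm, add_comm (_ ^ q)]

-- With `t' = t + s + 1`, the points `(s, t)` lie on a cubic with a node at `(1, 1)`; the lines
-- of slope `m` through the node give the parametrization `s = m² + m`, `t = (m + 1)³`.
lemma exists_pow_three_eq_of_mul_eq_pow_three {F : Type*} [Field F] [CharP F 2] {t t' s : F}
    (hmul : t * t' = s ^ 3) (hadd : t + t' + s + 1 = 0) : ∃ y : F, y ^ 3 = t := by
  have h2 : (2 : F) = 0 := CharTwo.two_eq_zero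
  obtain rfl : t' = t + s + 1 := by linear_combination hadd - (t + s + 1) * h2
  by_cases hs : s + 1 = 0
  · have hsq : (t + 1) ^ 2 = 0 := by
      linear_combination hmul + (s ^ 2 - s - t + 1) * hs + t * h2
    refine ⟨1, ?_⟩
    linear_combination -(pow_eq_zero_iff two_ne_zero).1 hsq + h2
  · obtain ⟨m, hm⟩ : ∃ m, t + 1 = m * (s + 1) := ⟨(t + 1) / (s + 1), by field_simp⟩
    have hsm : s = m ^ 2 + m := by
      apply mul_left_cancel₀ (pow_ne_zero 2 hs)
      linear_combination -hmul + (s ^ 2 - t - 1) * h2 + (t + 1 + m * (s + 1) + s + 1) * hm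
    refine ⟨m + 1, ?_⟩
    linear_combination -hm - m * hsm + (m ^ 2 + m + 1) * h2

lemma traceNormMultiplier_ne_zero {F : Type*} [Field F] [CharP F 2] {q : ℕ} {β : F}
    (hβ : β ^ (q + 1) = 1) (hcube : ∀ y : F, y ^ 3 ≠ β) (x : F) :
    traceNormMultiplier q β x ≠ 0 := by
  intro h
  have hq : q ≠ 0 := by
    rintro rfl
    exact hcube 1 (by simpa using hβ.symm)
  have hx : x ≠ 0 := by
    rintro rfl
    simp [traceNormMultiplier, hq] at h
  have hnorm : β * x ^ 3 * (β * x ^ 3) ^ q = (x ^ (q + 1)) ^ 3 := by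
    rw [← pow_succ', mul_pow, hβ, one_mul, pow_right_comm]
  obtain ⟨y, hy⟩ := exists_pow_three_eq_of_mul_eq_pow_three hnorm h
  exact hcube (y / x) (by rw [div_pow, hy, mul_div_cancel_right₀ _ (pow_ne_zero 3 hx)])

lemma sum_traceNormMultiplier_mul_pow {F : Type*} [Field F] [Fintype F] {q : ℕ}
    (hF : Fintype.card F = q ^ 2) (hq : 4 ≤ q) (β : F) {i j : ℕ} (hi : i < q - 1)
    (hj : j < q - 1) :
    ∑ x, traceNormMultiplier q β x * (x ^ i * (x ^ q) ^ j) =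
      if i = q - 2 ∧ j = q - 2 then -1 else 0 := by
  have hexpand (x : F) : traceNormMultiplier q β x * (x ^ i * (x ^ q) ^ j) =
      β * (x ^ (i + 3) * (x ^ q) ^ j) + β ^ q * (x ^ i * (x ^ q) ^ (j + 3)) +
        x ^ (i + 1) * (x ^ q) ^ (j + 1) + x ^ i * (x ^ q) ^ j := by
    rw [traceNormMultiplier]
    ring
  have hi' : i ≠ q - 1 := by omega
  have hj' : j ≠ q - 1 := by omega
  have hiff (k : ℕ) : k + 1 = q - 1 ↔ k = q - 2 := by omega
  simp_rw [hexpand, Finset.sum_add_distrib, ← Finset.mul_sum]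
  rw [sum_pow_mul_pow_pow hF hq (by omega) (by omega),
    sum_pow_mul_pow_pow hF hq (by omega) (by omega),
    sum_pow_mul_pow_pow hF hq (by omega) (by omega),
    sum_pow_mul_pow_pow hF hq (by omega) (by omega)]
  simp [hi', hj', hiff]

lemma sum_traceNormMultiplier_mul_eval {F : Type*} [Field F] [Fintype F] {q : ℕ}
    (hF : Fintype.card F = q ^ 2) (hq : 4 ≤ q) (β : F) {f g : F[X]}
    (hf : f.degree < (q - 1 : ℕ)) (hg : g.degree < (q - 1 : ℕ)) :
    ∑ x, traceNormMultiplier q β x * f.eval x * g.eval x ^ q =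
      -(f.coeff (q - 2) * g.coeff (q - 2) ^ q) := by
  obtain ⟨σ, hσ⟩ := exists_ringHom_eq_pow_of_dvd_card (hF ▸ dvd_pow_self q two_ne_zero)
  have hlt : q - 2 < q - 1 := by omega
  simp_rw [← hσ]
  calc
    _ = ∑ i ∈ Finset.range (q - 1), ∑ j ∈ Finset.range (q - 1), f.coeff i * σ (g.coeff j) *
          ∑ x, traceNormMultiplier q β x * (x ^ i * σ x ^ j) :=
      sum_mul_eval_mul_map_eval σ _ _ hf hg
    _ = ∑ i ∈ Finset.range (q - 1), ∑ j ∈ Finset.range (q - 1), f.coeff i * σ (g.coeff j) *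
          if i = q - 2 ∧ j = q - 2 then -1 else 0 := by
      refine Finset.sum_congr rfl fun i hi ↦ Finset.sum_congr rfl fun j hj ↦ ?_
      simp_rw [hσ, sum_traceNormMultiplier_mul_pow hF hq β (Finset.mem_range.1 hi)
        (Finset.mem_range.1 hj)]
    _ = -(f.coeff (q - 2) * σ (g.coeff (q - 2))) := by
      simp [ite_and, hlt]

end TraceNorm

section PunctureCode

variable {F : Type} [Field F] {q k : ℕ} (a : Fin (q ^ 2) → F)

@[simp]
lemma rsWord_castSucc (f : F[X]) (i : Fin (q ^ 2)) :
    rsWord q k a f i.castSucc = f.eval (a i) := by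
  simp [rsWord]

@[simp]
lemma rsWord_last (f : F[X]) : rsWord q k a f (Fin.last _) = f.coeff (k - 1) := by
  simp [rsWord]

/-- The word `(λ(a_1), …, λ(a_{q²}), 1)` with `λ = traceNormMultiplier q β`, a candidate for a
word of full weight in the puncture code. -/
def traceNormWord (β : F) : Fin (q ^ 2 + 1) → F :=
  Fin.snoc (α := fun _ ↦ F) (fun i ↦ traceNormMultiplier q β (a i)) 1

@[simp]
lemma traceNormWord_castSucc (β : F) (i : Fin (q ^ 2)) :
    traceNormWord a β i.castSucc = traceNormMultiplier q β (a i) := by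
  simp [traceNormWord]

@[simp]
lemma traceNormWord_last (β : F) : traceNormWord a β (Fin.last _) = 1 := by
  simp [traceNormWord]

lemma traceNormWord_ne_zero [CharP F 2] {β : F} (hβ : β ^ (q + 1) = 1)
    (hcube : ∀ y : F, y ^ 3 ≠ β) (i : Fin (q ^ 2 + 1)) : traceNormWord a β i ≠ 0 := by
  cases i using Fin.lastCases with
  | last => simp
  | cast i => simpa using traceNormMultiplier_ne_zero hβ hcube (a i)

variable {a} [Fintype F]

lemma traceNormWord_mem_puncRS (hF : Fintype.card F = q ^ 2) (hq : 4 ≤ q)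
    (ha : Function.Bijective a) (β : F) : traceNormWord a β ∈ puncRS q (q - 1) a := by
  refine ⟨fun i ↦ ?_, fun f g hf hg ↦ ?_⟩
  · cases i using Fin.lastCases with
    | last => simp
    | cast i => simpa using traceNormMultiplier_pow hF β (a i)
  · simp_rw [Fin.sum_univ_castSucc, traceNormWord_castSucc, traceNormWord_last, rsWord_castSucc,
      rsWord_last]
    rw [ha.sum_comp fun x ↦ traceNormMultiplier q β x * f.eval x * g.eval x ^ q,
      sum_traceNormMultiplier_mul_eval hF hq β hf hg, one_mul, Nat.sub_sub, neg_add_cancel]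

lemma exists_selfOrthogonal_of_mem_puncRS (hF : Fintype.card F = q ^ 2)
    {lam : Fin (q ^ 2 + 1) → F} (hlam : lam ∈ puncRS q k a) (hne : ∀ i, lam i ≠ 0) :
    ∃ θ : Fin (q ^ 2 + 1) → F, (∀ i, θ i ≠ 0) ∧ ∀ f g : F[X], f.degree < k → g.degree < k →
      ∑ i, (θ i * rsWord q k a f i) * (θ i * rsWord q k a g i) ^ q = 0 := by
  obtain ⟨hfix, horth⟩ := hlam
  choose θ hθ using fun i ↦ exists_pow_succ_eq_of_pow_eq_self hF (hfix i)
  refine ⟨θ, fun i h0 ↦ hne i ?_, fun f g hf hg ↦ ?_⟩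
  · rw [← hθ, h0, zero_pow q.succ_ne_zero]
  · rw [← horth f g hf hg]
    refine Finset.sum_congr rfl fun i _ ↦ ?_
    rw [← hθ, mul_pow]
    ring

end PunctureCode

/-- If `q = 2^r` and `r ≥ 3` is odd, then there is a Hermitian
self-orthogonal `[q²+1, q-1, q²-q+3]_{q²}` generalised Reed-Solomon code: there exist nonzero
`θ_1, …, θ_{q²+1} ∈ 𝔽_{q²}` such that the code
`{(θ_1 f(a_1), …, θ_{q²} f(a_{q²}), θ_{q²+1} f_{q-2}) : f ∈ 𝔽_{q²}[X], deg f ≤ q-2}`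
is Hermitian self-orthogonal. -/
theorem hermitian_selforthogonal_GRS_length_q_sq_plus_one
    (r q : ℕ) (hr3 : 3 ≤ r) (hr : Odd r) (hq : q = 2 ^ r)
    (F : Type) [Field F] [Fintype F] (hF : Fintype.card F = q ^ 2)
    (a : Fin (q ^ 2) → F) (ha : Function.Bijective a) :
    ∃ θ : Fin (q ^ 2 + 1) → F, (∀ i, θ i ≠ 0) ∧
      ∀ f g : Polynomial F,
        f.degree < ((q - 1 : ℕ) : WithBot ℕ) → g.degree < ((q - 1 : ℕ) : WithBot ℕ) →
        ∑ i, (θ i * rsWord q (q - 1) a f i) * (θ i * rsWord q (q - 1) a g i) ^ q = 0 := by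
  have hq8 : 2 ^ 3 ≤ q := hq ▸ Nat.pow_le_pow_right two_pos hr3
  have hdvd : 3 ∣ q + 1 := by simpa [hq] using hr.nat_add_dvd_pow_add_pow 2 1
  have hchar : CharP F 2 := charP_of_card_eq_prime_pow (hF.trans (by rw [hq, ← pow_mul]))
  obtain ⟨β, hβ, hcube⟩ := exists_pow_succ_eq_one_forall_pow_ne hF hdvd (by omega)
  exact exists_selfOrthogonal_of_mem_puncRS hF (traceNormWord_mem_puncRS hF (by omega) ha β)
    (traceNormWord_ne_zero a hβ hcube)
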